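/- Fix 0 < T < ∞, α ∈ (1,2] and δ ∈ [0, (α−1)/2). Fix β ∈ (α/2, α − δ − 1/2) and η ∈ ((1+2δ+2β)/(2α), 1). Then there exists a constant C > 0 such that for every N ≥ 1, every t ∈ (0,T] and every v with |v|_{H^{−α/2}_2} < ∞, one has |(1 − P_N) e^{−A^{α/2} t} v|_{C^δ} ≤ C · t^{−η} · N^{−(β − α/2)} · |v|_{H^{−α/2}_2}. -/

import Mathlib

/-!
Write `λ k = (k+1)π` and `a k = fco v k`. The elementary inequality `exp (-y) ≤ y ^ (-η)` for
`0 ≤ η ≤ 1`, applied to `y = λ k ^ α * t`, trades the semigroup for the factor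
`t ^ (-η) * λ k ^ (-αη)` (`exp_neg_le_rpow_neg`). On the modes `k ≥ N` one has
`λ k ^ (-(β - α/2)) ≤ N ^ (-(β - α/2))`, so (`tail_coeff_le`)

`λ k ^ δ * exp (-λ k ^ α t) * |a k|
  ≤ t ^ (-η) * N ^ (-(β - α/2)) * (λ k ^ (-α/2) * |a k|) * λ k ^ (δ + β - αη)`.

The lower bound on `η` says exactly that `2 (δ + β - αη) < -1`, so the last factor is square
summable and Cauchy-Schwarz (`tsum_mul_le_sqrt`) bounds `∑ λ k ^ δ * exp (-λ k ^ α t) * |a k|` over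
the tail by `t ^ (-η) * N ^ (-(β - α/2))` times the `H^{-α/2}` norm and a constant
(`tail_weighted_tsum_le`). This sum controls the `C^δ` norm, since the eigenfunctions satisfy
`|e_k| ≤ √2` and `|e_k x - e_k y| ≤ 2√2 λ k ^ δ |x - y| ^ δ` (`cNorm_tsum_le`).
-/

open Real MeasureTheory Set

noncomputable section

/-- `sineEig k` is the eigenfunction `e_{k+1}(x) = √2 sin((k+1)πx)` (0-based indexing). -/
def sineEig (k : ℕ) (x : ℝ) : ℝ := Real.sqrt 2 * Real.sin (((k : ℝ) + 1) * Real.pi * x)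

/-- Fourier sine coefficient `⟨v, e_{k+1}⟩ = ∫₀¹ v(x) e_{k+1}(x) dx`. -/
def fco (v : ℝ → ℝ) (k : ℕ) : ℝ := ∫ x in (0:ℝ)..1, v x * sineEig k x

/-- Fractional Dirichlet heat semigroup `e^{-A^{α/2} t} v`. -/
def heatSG (α t : ℝ) (v : ℝ → ℝ) (x : ℝ) : ℝ :=
  ∑' k : ℕ, Real.exp (-(((k : ℝ) + 1) * Real.pi) ^ α * t) * fco v k * sineEig k x

/-- Spectral Sobolev `H^β₂(0,1)` norm. -/
def hNorm (β : ℝ) (v : ℝ → ℝ) : ℝ :=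
  Real.sqrt (∑' k : ℕ, (((k : ℝ) + 1) * Real.pi) ^ (2 * β) * fco v k ^ 2)

/-- Membership in `H^β₂(0,1)` (finiteness of the spectral norm). -/
def memH (β : ℝ) (v : ℝ → ℝ) : Prop :=
  Summable fun k : ℕ => (((k : ℝ) + 1) * Real.pi) ^ (2 * β) * fco v k ^ 2

/-- Supremum norm on `[0,1]`. -/
def supIcc (v : ℝ → ℝ) : ℝ := ⨆ x : Icc (0:ℝ) 1, |v (x : ℝ)|

/-- Hölder seminorm of exponent `δ` on `[0,1]`. -/
def holderSemi (δ : ℝ) (v : ℝ → ℝ) : ℝ :=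
  ⨆ p : Icc (0:ℝ) 1 × Icc (0:ℝ) 1,
    |v (p.1 : ℝ) - v (p.2 : ℝ)| / |(p.1 : ℝ) - (p.2 : ℝ)| ^ δ

/-- The `C^δ(0,1)` norm: sup norm plus Hölder seminorm (just the sup norm when `δ = 0`). -/
def cNorm (δ : ℝ) (v : ℝ → ℝ) : ℝ :=
  if δ = 0 then supIcc v else supIcc v + holderSemi δ v

/-- Membership in `C^δ(0,1)`: continuity plus finite Hölder seminorm. -/
def memC (δ : ℝ) (u : ℝ → ℝ) : Prop :=
  ContinuousOn u (Icc 0 1) ∧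
    BddAbove (Set.range fun p : Icc (0:ℝ) 1 × Icc (0:ℝ) 1 =>
      |u (p.1 : ℝ) - u (p.2 : ℝ)| / |(p.1 : ℝ) - (p.2 : ℝ)| ^ δ)

/-- `L^p(0,1)` norm. -/
def lpNorm (p : ℝ) (v : ℝ → ℝ) : ℝ := (∫ x in (0:ℝ)..1, |v x| ^ p) ^ (1 / p)

/-- Galerkin projection `P_N v` onto the first `N` modes. -/
def galerkin (N : ℕ) (v : ℝ → ℝ) (x : ℝ) : ℝ :=
  ∑ k ∈ Finset.range N, fco v k * sineEig k x

/-- Spectral `H^β₂` norm of `(1 - P_N) v`. -/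
def tailHNorm (β : ℝ) (N : ℕ) (v : ℝ → ℝ) : ℝ :=
  Real.sqrt (∑' k : ℕ,
    if k < N then 0 else (((k : ℝ) + 1) * Real.pi) ^ (2 * β) * fco v k ^ 2)

/-- `(1 - P_N) e^{-A^{α/2} t} v`. -/
def tailSG (α t : ℝ) (N : ℕ) (v : ℝ → ℝ) (x : ℝ) : ℝ :=
  ∑' k : ℕ, if k < N then 0
    else Real.exp (-(((k : ℝ) + 1) * Real.pi) ^ α * t) * fco v k * sineEig k x

/-- Cosine coefficient `∫₀¹ g(x) √2 cos((k+1)πx) dx`. -/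
def cco (g : ℝ → ℝ) (k : ℕ) : ℝ :=
  ∫ x in (0:ℝ)..1, g x * (Real.sqrt 2 * Real.cos (((k : ℝ) + 1) * Real.pi * x))

/-- Spectral `H^{-α/2}₂` norm of the distributional derivative `∂ₓ g`. -/
def dxHNorm (α : ℝ) (g : ℝ → ℝ) : ℝ :=
  Real.sqrt (∑' k : ℕ, (((k : ℝ) + 1) * Real.pi) ^ (2 - α) * cco g k ^ 2)


lemma one_le_eigen (k : ℕ) : (1:ℝ) ≤ ((k : ℝ) + 1) * Real.pi := by
  have h1 : (0:ℝ) ≤ k := k.cast_nonneg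
  nlinarith [Real.pi_gt_three]

lemma eigen_pos (k : ℕ) : (0:ℝ) < ((k : ℝ) + 1) * Real.pi :=
  lt_of_lt_of_le one_pos (one_le_eigen k)

/-- The smoothing estimate `y ^ η * exp (-y) ≤ 1` for `0 ≤ η ≤ 1`, in the form in which it is
applied to each mode of the semigroup. -/
lemma exp_neg_le_rpow_neg {y η : ℝ} (hy : 0 < y) (h0 : 0 ≤ η) (h1 : η ≤ 1) :
    Real.exp (-y) ≤ y ^ (-η) := by
  rw [Real.rpow_neg hy.le, Real.exp_neg]
  apply inv_anti₀ (Real.rpow_pos_of_pos hy η)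
  rcases le_total y 1 with h | h
  · exact (Real.rpow_le_one hy.le h h0).trans (Real.one_le_exp hy.le)
  · calc y ^ η ≤ y ^ (1:ℝ) := Real.rpow_le_rpow_of_exponent_le h h1
      _ = y := Real.rpow_one y
      _ ≤ Real.exp y := by linarith [Real.add_one_le_exp y]

lemma abs_sineEig_le (k : ℕ) (x : ℝ) : |sineEig k x| ≤ Real.sqrt 2 := by
  unfold sineEig
  rw [abs_mul, abs_of_nonneg (Real.sqrt_nonneg 2)]
  exact mul_le_of_le_one_right (Real.sqrt_nonneg 2) (Real.abs_sin_le_one _)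

/-- Hölder continuity of the sine, interpolating between the bound `2` and the Lipschitz bound. -/
lemma abs_sin_sub_sin_le_rpow {δ : ℝ} (h0 : 0 ≤ δ) (h1 : δ ≤ 1) (a b : ℝ) :
    |Real.sin a - Real.sin b| ≤ 2 * |a - b| ^ δ := by
  rcases le_total |a - b| 1 with h | h
  · have h2 : |a - b| ≤ |a - b| ^ δ := by
      rcases (abs_nonneg (a - b)).eq_or_lt with h3 | h3
      · rw [← h3]; exact Real.rpow_nonneg le_rfl δ
      · simpa using Real.rpow_le_rpow_of_exponent_ge h3 h h1
    linarith [Real.abs_sin_sub_sin_le a b, abs_nonneg (a - b)]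
  · have h2 : 1 ≤ |a - b| ^ δ := Real.one_le_rpow h h0
    have h3 : |Real.sin a - Real.sin b| ≤ |Real.sin a| + |Real.sin b| := abs_sub _ _
    linarith [Real.abs_sin_le_one a, Real.abs_sin_le_one b]

lemma abs_sineEig_sub_le {δ : ℝ} (h0 : 0 ≤ δ) (h1 : δ ≤ 1) (k : ℕ) (x y : ℝ) :
    |sineEig k x - sineEig k y|
      ≤ 2 * Real.sqrt 2 * (((k : ℝ) + 1) * Real.pi) ^ δ * |x - y| ^ δ := by
  have h := abs_sin_sub_sin_le_rpow h0 h1 (((k : ℝ) + 1) * Real.pi * x)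
    (((k : ℝ) + 1) * Real.pi * y)
  rw [← mul_sub, abs_mul, abs_of_pos (eigen_pos k),
    Real.mul_rpow (eigen_pos k).le (abs_nonneg _)] at h
  unfold sineEig
  rw [← mul_sub, abs_mul, abs_of_nonneg (Real.sqrt_nonneg 2)]
  calc _ ≤ Real.sqrt 2 * (2 * ((((k : ℝ) + 1) * Real.pi) ^ δ * |x - y| ^ δ)) :=
        mul_le_mul_of_nonneg_left h (Real.sqrt_nonneg 2)
    _ = _ := by ring

/-- A sine series with coefficients `w` is controlled in `C^δ` by `∑ λ k ^ δ * |w k|`. -/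
lemma cNorm_tsum_le {δ S : ℝ} (h0 : 0 ≤ δ) (h1 : δ ≤ 1) (w : ℕ → ℝ)
    (hs : Summable fun k : ℕ => (((k : ℝ) + 1) * Real.pi) ^ δ * |w k|)
    (hS : ∑' k : ℕ, (((k : ℝ) + 1) * Real.pi) ^ δ * |w k| ≤ S) :
    cNorm δ (fun x => ∑' k : ℕ, w k * sineEig k x) ≤ 3 * Real.sqrt 2 * S := by
  have hS0 : 0 ≤ S := le_trans (tsum_nonneg fun k =>
    mul_nonneg (Real.rpow_nonneg (eigen_pos k).le δ) (abs_nonneg _)) hS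
  have hq : 0 ≤ Real.sqrt 2 := Real.sqrt_nonneg 2
  -- Every series below is dominated by a multiple of the weighted series `hs`.
  have key : ∀ (c : ℝ) (f : ℕ → ℝ), 0 ≤ c →
      (∀ k : ℕ, |f k| ≤ c * ((((k : ℝ) + 1) * Real.pi) ^ δ * |w k|)) →
      Summable f ∧ |∑' k, f k| ≤ c * S := by
    intro c f hc hf
    have hs' := hs.mul_left c
    refine ⟨Summable.of_norm_bounded hs' hf, ?_⟩
    calc |∑' k, f k| ≤ ∑' k : ℕ, c * ((((k : ℝ) + 1) * Real.pi) ^ δ * |w k|) :=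
          tsum_of_norm_bounded (f := f) hs'.hasSum hf
      _ = c * ∑' k : ℕ, ((((k : ℝ) + 1) * Real.pi) ^ δ * |w k|) := tsum_mul_left
      _ ≤ c * S := mul_le_mul_of_nonneg_left hS hc
  have hpt : ∀ x : ℝ, Summable (fun k => w k * sineEig k x) ∧
      |∑' k, w k * sineEig k x| ≤ Real.sqrt 2 * S := by
    intro x
    apply key _ _ hq
    intro k
    have hp : 1 ≤ (((k : ℝ) + 1) * Real.pi) ^ δ := Real.one_le_rpow (one_le_eigen k) h0
    rw [abs_mul]
    calc |w k| * |sineEig k x| ≤ |w k| * Real.sqrt 2 :=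
          mul_le_mul_of_nonneg_left (abs_sineEig_le k x) (abs_nonneg _)
      _ = Real.sqrt 2 * (1 * |w k|) := by ring
      _ ≤ _ := by gcongr
  have hsup : supIcc (fun x => ∑' k : ℕ, w k * sineEig k x) ≤ Real.sqrt 2 * S :=
    Real.iSup_le (fun x => (hpt x).2) (by positivity)
  have hhol : holderSemi δ (fun x => ∑' k : ℕ, w k * sineEig k x) ≤ 2 * Real.sqrt 2 * S := by
    refine Real.iSup_le (fun p => ?_) (by positivity)
    obtain ⟨x, y⟩ := p
    have hd : 0 ≤ |(x:ℝ) - y| ^ δ := Real.rpow_nonneg (abs_nonneg _) δ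
    apply div_le_of_le_mul₀ hd (by positivity)
    have h3 := (key (2 * Real.sqrt 2 * |(x:ℝ) - y| ^ δ)
      (fun k => w k * sineEig k x - w k * sineEig k y) (by positivity) (by
        intro k
        rw [← mul_sub, abs_mul]
        calc |w k| * |sineEig k x - sineEig k y|
            ≤ |w k| * (2 * Real.sqrt 2 * (((k : ℝ) + 1) * Real.pi) ^ δ * |(x:ℝ) - y| ^ δ) :=
              mul_le_mul_of_nonneg_left (abs_sineEig_sub_le h0 h1 k x y) (abs_nonneg _)
          _ = _ := by ring)).2
    rw [(hpt x).1.tsum_sub (hpt y).1] at h3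
    calc _ ≤ _ := h3
      _ = _ := by ring
  unfold cNorm
  split_ifs
  · nlinarith [mul_nonneg hq hS0]
  · linarith

/-- Cauchy-Schwarz for series of nonnegative reals. -/
lemma tsum_mul_le_sqrt (f g : ℕ → ℝ) (hf : ∀ k, 0 ≤ f k) (hg : ∀ k, 0 ≤ g k)
    (hf2 : Summable fun k => f k ^ 2) (hg2 : Summable fun k => g k ^ 2) :
    Summable (fun k => f k * g k) ∧
      ∑' k, f k * g k ≤ Real.sqrt (∑' k, f k ^ 2) * Real.sqrt (∑' k, g k ^ 2) := by
  have hf2' : Summable fun k => f k ^ (2:ℝ) := by simpa using hf2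
  have hg2' : Summable fun k => g k ^ (2:ℝ) := by simpa using hg2
  have h := Real.summable_and_inner_le_Lp_mul_Lq_tsum_of_nonneg
    Real.HolderConjugate.two_two hf hg hf2' hg2'
  simpa [Real.sqrt_eq_rpow] using h

/-- Modewise bound on the tail of the semigroup. -/
lemma tail_coeff_le {α δ β η t : ℝ} (hβ : α / 2 ≤ β) (hη0 : 0 ≤ η) (hη1 : η ≤ 1) (ht : 0 < t)
    {N : ℕ} (hN : 1 ≤ N) {k : ℕ} (hk : N ≤ k) (a : ℝ) :
    (((k : ℝ) + 1) * Real.pi) ^ δ * |Real.exp (-(((k : ℝ) + 1) * Real.pi) ^ α * t) * a|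
      ≤ t ^ (-η) * (N : ℝ) ^ (-(β - α / 2)) *
        ((((k : ℝ) + 1) * Real.pi) ^ (-(α / 2)) * |a| *
          (((k : ℝ) + 1) * Real.pi) ^ (δ + β - α * η)) := by
  have hl := eigen_pos k
  have hNl : (N : ℝ) ≤ ((k : ℝ) + 1) * Real.pi := by
    have h1 : (N : ℝ) ≤ k := by exact_mod_cast hk
    nlinarith [Real.pi_gt_three, (k.cast_nonneg : (0:ℝ) ≤ k)]
  set l : ℝ := ((k : ℝ) + 1) * Real.pi
  have hN0 : (0:ℝ) < N := by exact_mod_cast hN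
  have hexp : Real.exp (-l ^ α * t) ≤ l ^ (-(α * η)) * t ^ (-η) := by
    have h := exp_neg_le_rpow_neg (mul_pos (Real.rpow_pos_of_pos hl α) ht) hη0 hη1
    rwa [Real.mul_rpow (Real.rpow_nonneg hl.le α) ht.le, ← Real.rpow_mul hl.le, mul_neg,
      ← neg_mul] at h
  have hpow : l ^ (-(β - α / 2)) ≤ (N : ℝ) ^ (-(β - α / 2)) :=
    Real.rpow_le_rpow_of_nonpos hN0 hNl (by linarith)
  have hsplit : l ^ δ * l ^ (-(α * η))
      = l ^ (-(β - α / 2)) * (l ^ (-(α / 2)) * l ^ (δ + β - α * η)) := by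
    rw [← Real.rpow_add hl, ← Real.rpow_add hl, ← Real.rpow_add hl]
    congr 1; ring
  rw [abs_mul, abs_of_pos (Real.exp_pos _)]
  calc l ^ δ * (Real.exp (-l ^ α * t) * |a|)
      ≤ l ^ δ * (l ^ (-(α * η)) * t ^ (-η) * |a|) := by gcongr
    _ = (l ^ δ * l ^ (-(α * η))) * (t ^ (-η) * |a|) := by ring
    _ = l ^ (-(β - α / 2)) * (l ^ (-(α / 2)) * l ^ (δ + β - α * η) * (t ^ (-η) * |a|)) := by
        rw [hsplit]; ring
    _ ≤ (N : ℝ) ^ (-(β - α / 2)) *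
        (l ^ (-(α / 2)) * l ^ (δ + β - α * η) * (t ^ (-η) * |a|)) := by
        gcongr
    _ = _ := by ring

lemma summable_eigen_rpow {s : ℝ} (hs : 2 * s < -1) :
    Summable fun k : ℕ => ((((k : ℝ) + 1) * Real.pi) ^ s) ^ 2 := by
  have h1 : Summable fun k : ℕ => ((k : ℝ) + 1) ^ (2 * s) := by
    have h2 := (summable_nat_add_iff 1).2 (Real.summable_nat_rpow.2 hs)
    simpa using h2
  refine (h1.mul_right (Real.pi ^ (2 * s))).congr fun k => ?_
  rw [← Real.mul_rpow (by positivity) Real.pi_pos.le, ← Real.rpow_natCast,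
    ← Real.rpow_mul (eigen_pos k).le]
  congr 1; push_cast; ring

lemma tail_weighted_tsum_le {α δ β η t : ℝ} (hβ : α / 2 ≤ β) (hη0 : 0 ≤ η) (hη1 : η ≤ 1)
    (hs : 2 * (δ + β - α * η) < -1) (ht : 0 < t) {N : ℕ} (hN : 1 ≤ N) (v : ℝ → ℝ)
    (hv : memH (-(α / 2)) v) :
    Summable (fun k : ℕ => (((k : ℝ) + 1) * Real.pi) ^ δ *
        |if k < N then 0 else Real.exp (-(((k : ℝ) + 1) * Real.pi) ^ α * t) * fco v k|) ∧
      ∑' k : ℕ, (((k : ℝ) + 1) * Real.pi) ^ δ *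
        |if k < N then 0 else Real.exp (-(((k : ℝ) + 1) * Real.pi) ^ α * t) * fco v k|
      ≤ t ^ (-η) * (N : ℝ) ^ (-(β - α / 2)) * (hNorm (-(α / 2)) v *
          Real.sqrt (∑' k : ℕ, ((((k : ℝ) + 1) * Real.pi) ^ (δ + β - α * η)) ^ 2)) := by
  have hsq : ∀ k : ℕ, ((((k : ℝ) + 1) * Real.pi) ^ (-(α / 2)) * |fco v k|) ^ 2
      = (((k : ℝ) + 1) * Real.pi) ^ (2 * -(α / 2)) * fco v k ^ 2 := by
    intro k
    rw [mul_pow, sq_abs, ← Real.rpow_natCast, ← Real.rpow_mul (eigen_pos k).le]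
    congr 2; push_cast; ring
  obtain ⟨hsum, hle⟩ := tsum_mul_le_sqrt
    (fun k : ℕ => (((k : ℝ) + 1) * Real.pi) ^ (-(α / 2)) * |fco v k|)
    (fun k : ℕ => (((k : ℝ) + 1) * Real.pi) ^ (δ + β - α * η))
    (fun k => mul_nonneg (Real.rpow_nonneg (eigen_pos k).le _) (abs_nonneg _))
    (fun k => Real.rpow_nonneg (eigen_pos k).le _)
    (Summable.congr hv fun k => (hsq k).symm) (summable_eigen_rpow hs)
  simp only [hsq] at hle
  have hc : 0 ≤ t ^ (-η) * (N : ℝ) ^ (-(β - α / 2)) := by positivity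
  have hterm : ∀ k : ℕ, (((k : ℝ) + 1) * Real.pi) ^ δ *
        |if k < N then 0 else Real.exp (-(((k : ℝ) + 1) * Real.pi) ^ α * t) * fco v k|
      ≤ t ^ (-η) * (N : ℝ) ^ (-(β - α / 2)) *
        ((((k : ℝ) + 1) * Real.pi) ^ (-(α / 2)) * |fco v k| *
          (((k : ℝ) + 1) * Real.pi) ^ (δ + β - α * η)) := by
    intro k
    split_ifs with hk
    · rw [abs_zero, mul_zero]
      have := eigen_pos k
      positivity
    · exact tail_coeff_le hβ hη0 hη1 ht hN (not_lt.1 hk) _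
  have hsum' := hsum.mul_left (t ^ (-η) * (N : ℝ) ^ (-(β - α / 2)))
  have hsumT := Summable.of_nonneg_of_le
    (fun k => mul_nonneg (Real.rpow_nonneg (eigen_pos k).le δ) (abs_nonneg _)) hterm hsum'
  refine ⟨hsumT, (hsumT.tsum_le_tsum hterm hsum').trans ?_⟩
  rw [tsum_mul_left]
  exact mul_le_mul_of_nonneg_left hle hc

/-- rate of convergence of `(1 - P_N) e^{-A^{α/2}t}` from `H^{-α/2}₂` to `C^δ`. -/
theorem stmt13 (T α δ β η : ℝ) (hT : 0 < T) (hα : α ∈ Set.Ioc (1:ℝ) 2)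
    (hδ : δ ∈ Set.Ico (0:ℝ) ((α - 1)/2)) (hβ : β ∈ Set.Ioo (α/2) (α - δ - 1/2))
    (hη : η ∈ Set.Ioo ((1 + 2*δ + 2*β)/(2*α)) 1) :
    ∃ C > 0, ∀ N : ℕ, 1 ≤ N → ∀ t ∈ Set.Ioc (0:ℝ) T, ∀ v : ℝ → ℝ, memH (-(α/2)) v →
      cNorm δ (tailSG α t N v)
        ≤ C * t ^ (-η) * (N : ℝ) ^ (-(β - α/2)) * hNorm (-(α/2)) v := by
  obtain ⟨hα1, hα2⟩ := hα
  obtain ⟨hδ0, hδ1⟩ := hδ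
  obtain ⟨hβ0, -⟩ := hβ
  obtain ⟨hη0, hη1⟩ := hη
  have hs : 2 * (δ + β - α * η) < -1 := by
    rw [div_lt_iff₀ (by linarith)] at hη0
    linarith
  have hη0' : 0 ≤ η := le_trans (div_nonneg (by linarith) (by linarith)) hη0.le
  set D : ℝ := Real.sqrt (∑' k : ℕ, ((((k : ℝ) + 1) * Real.pi) ^ (δ + β - α * η)) ^ 2) with hD
  have hDpos : 0 < D := by
    apply Real.sqrt_pos.2
    exact (summable_eigen_rpow hs).tsum_pos (fun k => sq_nonneg _) 0
      (pow_pos (Real.rpow_pos_of_pos (eigen_pos 0) _) 2)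
  refine ⟨3 * Real.sqrt 2 * D, by positivity, fun N hN t ht v hv => ?_⟩
  obtain ⟨h1, h2⟩ := tail_weighted_tsum_le hβ0.le hη0' hη1.le hs ht.1 hN v hv
  have h3 := cNorm_tsum_le hδ0 (by linarith) _ h1 h2
  have heq : tailSG α t N v = fun x => ∑' k : ℕ,
      (if k < N then 0 else Real.exp (-(((k : ℝ) + 1) * Real.pi) ^ α * t) * fco v k)
        * sineEig k x := by
    funext x
    unfold tailSG
    simp only [ite_mul, zero_mul]
  rw [heq]
  refine h3.trans (le_of_eq ?_)
  rw [← hD]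
  ring
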